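/- Let X and Y be real Banach spaces, let F : X → Y be continuous, and let x̄ ∈ X satisfy F(x̄) = 0. For every h > 0 let F_h : X → Y be continuous. Assume: (i) F_h(x̄) → 0 in Y as h → 0; (ii) F and every F_h are Fréchet differentiable at x̄, the operator norms ‖dF[x̄] − dF_h[x̄]‖_{L(X,Y)} tend to 0 as h → 0, and there exists a nondecreasing function c : (0,∞) → [0,∞) with c(r) → 0 as r → 0⁺ such that for every r > 0, every h > 0 and all x, x′ in the ball B_X(x̄, r) one has ‖F(x) − F(x′) − dF[x̄](x − x′)‖_Y ≤ c(r)‖x − x′‖_X and ‖F_h(x) − F_h(x′) − dF_h[x̄](x − x′)‖_Y ≤ c(r)‖x − x′‖_X; (iii) dF[x̄] is an isomorphism from X onto Y (a bijective continuous linear map with continuous inverse). Then there exist a neighborhood O of x̄ in X and h₀ > 0 such that for every 0 < h ≤ h₀ there exists a unique x̄_h ∈ O with F_h(x̄_h) = 0, and moreover ‖x̄ − x̄_h‖_X ≤ 2 ‖dF[x̄]⁻¹‖_{L(Y,X)} ‖F_h(x̄)‖_Y. -/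

import Mathlib

open Filter Metric

/-!
Since `dFh h → dF`, the map `Fh h` differs from `dF` on a small ball around `xb` by a map whose
Lipschitz constant `κ` does not depend on `h` and satisfies `‖dF⁻¹‖ κ ≤ 1 / 2`. Hence `Fh h` is
injective on that ball, and by Newton's iteration with the fixed derivative `dF` it has a zero
within `2 ‖dF⁻¹‖ ‖Fh h xb‖` of `xb`. This point lies in the ball once `Fh h xb` is small.
-/

open scoped NNReal Topology

section

variable {𝕜 X Y ι : Type*} [NontriviallyNormedField 𝕜]
  [NormedAddCommGroup X] [NormedSpace 𝕜 X] [NormedAddCommGroup Y] [NormedSpace 𝕜 Y]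
  {l : Filter ι} {f : X → Y} {G : ι → X → Y} {A : X ≃L[𝕜] Y} {A' : ι → X →L[𝕜] Y}
  {s : Set X} {x₀ : X} {κ : ℝ≥0}

theorem mul_norm_sub_le_of_approximatesLinearOn (hf : ApproximatesLinearOn f (A : X →L[𝕜] Y) s κ)
    {x y : X} (hx : x ∈ s) (hy : y ∈ s) :
    (1 - ‖(A.symm : Y →L[𝕜] X)‖ * κ) * ‖x - y‖ ≤ ‖(A.symm : Y →L[𝕜] X)‖ * ‖f x - f y‖ := by
  have hA : ‖A (x - y)‖ ≤ ‖f x - f y‖ + κ * ‖x - y‖ :=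
    (norm_le_norm_add_norm_sub _ _).trans (by gcongr; exact hf x hx y hy)
  have hsymm : ‖x - y‖ ≤ ‖(A.symm : Y →L[𝕜] X)‖ * (‖f x - f y‖ + κ * ‖x - y‖) :=
    calc ‖x - y‖ = ‖(A.symm : Y →L[𝕜] X) (A (x - y))‖ := by simp
      _ ≤ ‖(A.symm : Y →L[𝕜] X)‖ * ‖A (x - y)‖ := ContinuousLinearMap.le_opNorm _ _
      _ ≤ _ := by gcongr
  linarith

theorem surjOn_closedBall_of_approximatesLinearOn [CompleteSpace X]
    (hf : ApproximatesLinearOn f (A : X →L[𝕜] Y) s κ) {ε δ : ℝ} (hε : 0 ≤ ε)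
    (hs : closedBall x₀ ε ⊆ s)
    (hδ : ‖(A.symm : Y →L[𝕜] X)‖ * δ ≤ (1 - ‖(A.symm : Y →L[𝕜] X)‖ * κ) * ε) :
    Set.SurjOn f (closedBall x₀ ε) (closedBall (f x₀) δ) := by
  rcases A.subsingleton_or_norm_symm_pos with hX | hpos
  · have : Subsingleton Y := A.symm.injective.subsingleton
    exact fun y _ ↦ ⟨x₀, mem_closedBall_self hε, Subsingleton.elim _ _⟩
  · have hδ' : δ ≤ (‖(A.symm : Y →L[𝕜] X)‖⁻¹ - κ) * ε := by
      refine le_of_mul_le_mul_left (hδ.trans_eq ?_) hpos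
      field_simp
    exact (hf.surjOn_closedBall_of_nonlinearRightInverse A.toNonlinearRightInverse hε hs).mono
      subset_rfl (closedBall_subset_closedBall hδ')

theorem exists_unique_zero_of_approximatesLinearOn_ball [CompleteSpace X] {r : ℝ}
    (hf : ApproximatesLinearOn f (A : X →L[𝕜] Y) (ball x₀ r) κ)
    (hκ : ‖(A.symm : Y →L[𝕜] X)‖ * κ ≤ 1 / 2)
    (hr : 2 * ‖(A.symm : Y →L[𝕜] X)‖ * ‖f x₀‖ < r) :
    ∃ x, (x ∈ ball x₀ r ∧ f x = 0) ∧ (∀ y, y ∈ ball x₀ r → f y = 0 → y = x) ∧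
      ‖x₀ - x‖ ≤ 2 * ‖(A.symm : Y →L[𝕜] X)‖ * ‖f x₀‖ := by
  have hsub := closedBall_subset_ball (x := x₀) hr
  have hε : 0 ≤ 2 * ‖(A.symm : Y →L[𝕜] X)‖ * ‖f x₀‖ := by positivity
  have hradius : ‖(A.symm : Y →L[𝕜] X)‖ * ‖f x₀‖ ≤
      (1 - ‖(A.symm : Y →L[𝕜] X)‖ * κ) * (2 * ‖(A.symm : Y →L[𝕜] X)‖ * ‖f x₀‖) := by
    linarith [mul_le_mul_of_nonneg_right hκ hε]
  obtain ⟨x, hx, hfx⟩ : (0 : Y) ∈ f '' closedBall x₀ _ :=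
    surjOn_closedBall_of_approximatesLinearOn hf hε hsub hradius (by simp)
  refine ⟨x, ⟨hsub hx, hfx⟩, fun y hy hfy ↦ ?_, mem_closedBall_iff_norm'.1 hx⟩
  have hyx := mul_norm_sub_le_of_approximatesLinearOn hf hy (hsub hx)
  rw [hfy, hfx, sub_zero, norm_zero, mul_zero] at hyx
  have : ‖y - x‖ ≤ 0 := nonpos_of_mul_nonpos_right hyx (by linarith)
  exact sub_eq_zero.1 (norm_le_zero_iff.1 this)

theorem exists_nhds_eventually_unique_zero_of_approximatesLinearOn [CompleteSpace X]
    (hs : s ∈ 𝓝 x₀) (hκ : ‖(A.symm : Y →L[𝕜] X)‖ * κ ≤ 1 / 2)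
    (hG : ∀ᶠ i in l, ApproximatesLinearOn (G i) (A : X →L[𝕜] Y) s κ)
    (hG₀ : Tendsto (fun i ↦ G i x₀) l (𝓝 0)) :
    ∃ O ∈ 𝓝 x₀, ∀ᶠ i in l, ∃ x, (x ∈ O ∧ G i x = 0) ∧ (∀ y, y ∈ O → G i y = 0 → y = x) ∧
      ‖x₀ - x‖ ≤ 2 * ‖(A.symm : Y →L[𝕜] X)‖ * ‖G i x₀‖ := by
  obtain ⟨r, hr, hrs⟩ := Metric.mem_nhds_iff.1 hs
  have hsmall : ∀ᶠ i in l, 2 * ‖(A.symm : Y →L[𝕜] X)‖ * ‖G i x₀‖ < r :=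
    (hG₀.norm.const_mul _).eventually_lt_const (by simpa using hr)
  refine ⟨ball x₀ r, ball_mem_nhds x₀ hr, ?_⟩
  filter_upwards [hG, hsmall] with i hi hir
  exact exists_unique_zero_of_approximatesLinearOn_ball (hi.mono_set hrs) hκ hir

theorem approximatesLinearOn_add_nnnorm_sub {B B' : X →L[𝕜] Y}
    (hf : ApproximatesLinearOn f B s κ) : ApproximatesLinearOn f B' s (κ + ‖B - B'‖₊) := by
  intro x hx y hy
  calc ‖f x - f y - B' (x - y)‖
      = ‖(f x - f y - B (x - y)) + (B - B') (x - y)‖ := by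
        rw [sub_apply, sub_add_sub_cancel]
    _ ≤ κ * ‖x - y‖ + ‖B - B'‖ * ‖x - y‖ :=
        norm_add_le_of_le (hf x hx y hy) ((B - B').le_opNorm _)
    _ = ↑(κ + ‖B - B'‖₊) * ‖x - y‖ := by rw [NNReal.coe_add, coe_nnnorm, add_mul]

theorem eventually_approximatesLinearOn_of_tendsto {B : X →L[𝕜] Y} {κ' : ℝ≥0}
    (hA' : Tendsto A' l (𝓝 B)) (hG : ∀ᶠ i in l, ApproximatesLinearOn (G i) (A' i) s κ)
    (hκ : κ < κ') : ∀ᶠ i in l, ApproximatesLinearOn (G i) B s κ' := by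
  have hlim : Tendsto (fun i ↦ κ + ‖A' i - B‖₊) l (𝓝 κ) := by
    simpa using ((hA'.sub_const B).nnnorm).const_add κ
  filter_upwards [hG, hlim.eventually_le_const hκ] with i hi hle
  exact (approximatesLinearOn_add_nnnorm_sub hi).mono_num hle

theorem exists_nhds_eventually_approximatesLinearOn_of_modulus {c : ℝ → ℝ}
    (hc : Tendsto c (𝓝[>] 0) (𝓝 0))
    (hG : ∀ᶠ i in l, ∀ r > (0 : ℝ), ∀ x ∈ ball x₀ r, ∀ x' ∈ ball x₀ r,
      ‖G i x - G i x' - A' i (x - x')‖ ≤ c r * ‖x - x'‖) (hκ : 0 < κ) :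
    ∃ s ∈ 𝓝 x₀, ∀ᶠ i in l, ApproximatesLinearOn (G i) (A' i) s κ := by
  obtain ⟨r, hcr, hr⟩ : ∃ r, c r ≤ κ ∧ 0 < r :=
    ((hc.eventually_le_const (NNReal.coe_pos.2 hκ)).and self_mem_nhdsWithin).exists
  refine ⟨ball x₀ r, ball_mem_nhds x₀ hr, ?_⟩
  filter_upwards [hG] with i hi x hx x' hx'
  exact (hi r hr x hx x' hx').trans (by gcongr)

theorem brezzi_rappaz_raviart_general [CompleteSpace X]
    (hG₀ : Tendsto (fun i ↦ G i x₀) l (𝓝 0)) (hA' : Tendsto A' l (𝓝 (A : X →L[𝕜] Y)))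
    (hG : ∀ κ : ℝ≥0, 0 < κ → ∃ s ∈ 𝓝 x₀, ∀ᶠ i in l, ApproximatesLinearOn (G i) (A' i) s κ) :
    ∃ O ∈ 𝓝 x₀, ∀ᶠ i in l, ∃ x, (x ∈ O ∧ G i x = 0) ∧ (∀ y, y ∈ O → G i y = 0 → y = x) ∧
      ‖x₀ - x‖ ≤ 2 * ‖(A.symm : Y →L[𝕜] X)‖ * ‖G i x₀‖ := by
  obtain ⟨κ, hκ, hAκ⟩ := exists_pos_mul_lt (one_half_pos (α := ℝ)) ‖(A.symm : Y →L[𝕜] X)‖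
  lift κ to ℝ≥0 using hκ.le
  obtain ⟨s, hs, hGs⟩ := hG (κ / 2) (half_pos hκ)
  exact exists_nhds_eventually_unique_zero_of_approximatesLinearOn hs hAκ.le
    (eventually_approximatesLinearOn_of_tendsto hA' hGs (half_lt_self hκ)) hG₀

end

/-- Brezzi–Rappaz–Raviart approximation theorem (reworked version). -/
theorem brezzi_rappaz_raviart
    {X Y : Type*} [NormedAddCommGroup X] [NormedSpace ℝ X] [CompleteSpace X]
    [NormedAddCommGroup Y] [NormedSpace ℝ Y] [CompleteSpace Y]
    (F : X → Y) (Fh : ℝ → X → Y) (xb : X)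
    (hFcont : Continuous F)
    (hFhcont : ∀ h : ℝ, 0 < h → Continuous (Fh h))
    (hFzero : F xb = 0)
    -- (i) F_h(xb) → 0 as h → 0⁺
    (hFh0 : Tendsto (fun h => Fh h xb) (nhdsWithin 0 (Set.Ioi 0)) (nhds 0))
    -- (iii) dF[xb] is an isomorphism (encoded as a continuous linear equivalence)
    (dF : X ≃L[ℝ] Y) (hdF : HasFDerivAt F (dF : X →L[ℝ] Y) xb)
    -- (ii) differentiability of the F_h at xb and convergence of the derivatives
    (dFh : ℝ → X →L[ℝ] Y)
    (hdFh : ∀ h : ℝ, 0 < h → HasFDerivAt (Fh h) (dFh h) xb)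
    (hconv : Tendsto (fun h => ‖(dF : X →L[ℝ] Y) - dFh h‖)
      (nhdsWithin 0 (Set.Ioi 0)) (nhds 0))
    -- the common modulus c
    (c : ℝ → ℝ) (hc_nonneg : ∀ r, 0 ≤ c r) (hc_mono : MonotoneOn c (Set.Ioi 0))
    (hc_lim : Tendsto c (nhdsWithin 0 (Set.Ioi 0)) (nhds 0))
    (hF_lip : ∀ r > (0:ℝ), ∀ x ∈ ball xb r, ∀ x' ∈ ball xb r,
      ‖F x - F x' - (dF : X →L[ℝ] Y) (x - x')‖ ≤ c r * ‖x - x'‖)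
    (hFh_lip : ∀ h > (0:ℝ), ∀ r > (0:ℝ), ∀ x ∈ ball xb r, ∀ x' ∈ ball xb r,
      ‖Fh h x - Fh h x' - dFh h (x - x')‖ ≤ c r * ‖x - x'‖) :
    ∃ O ∈ nhds xb, ∃ h₀ > (0:ℝ), ∀ h : ℝ, 0 < h → h ≤ h₀ →
      ∃ xh, (xh ∈ O ∧ Fh h xh = 0) ∧
        (∀ y, y ∈ O → Fh h y = 0 → y = xh) ∧
        ‖xb - xh‖ ≤ 2 * ‖(dF.symm : Y →L[ℝ] X)‖ * ‖Fh h xb‖ := by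
  obtain ⟨O, hO, hzero⟩ := brezzi_rappaz_raviart_general hFh0
    (tendsto_iff_norm_sub_tendsto_zero.2 (by simpa only [norm_sub_rev] using hconv))
    (fun _ ↦ exists_nhds_eventually_approximatesLinearOn_of_modulus hc_lim
      (eventually_mem_nhdsWithin.mono hFh_lip))
  obtain ⟨h₀, hh₀, hsub⟩ := mem_nhdsGT_iff_exists_Ioc_subset.1 hzero
  exact ⟨O, hO, h₀, hh₀, fun h hpos hle ↦ hsub ⟨hpos, hle⟩⟩
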